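/- (Convergence to Energetic solutions as μ ↓ 0.) Assume the energy functional E satisfies conditions (E1), (E2) and (E3). Let (uₙ⁰) ⊂ X and u₀ ∈ X satisfy uₙ⁰ → u₀ and E(0,uₙ⁰) → E(0,u₀), and suppose u₀ is stable at t = 0, i.e. E(0,u₀) ≤ E(0,v) + d(u₀,v) for all v ∈ X. Let (μₙ) ⊂ (0,∞) be a null sequence and let uₙ be a VE_{μₙ} solution of (X,E,d) with uₙ(0) = uₙ⁰ for each n. Then there exist a subsequence (u_{n_k}) and a curve u ∈ BV([0,T];X) with u(0) = u₀ such that u_{n_k}(t) → u(t) and E(t,u_{n_k}(t)) → E(t,u(t)) for every t ∈ [0,T], and u is an Energetic solution of (X,E,d). -/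

import Mathlib

open Filter MeasureTheory Topology Set
open scoped ENNReal

noncomputable section

variable {X : Type*} [MetricSpace X]

/-- Pointwise total variation of `u : ℝ → X` on a set `S ⊆ ℝ` (with value in `ℝ≥0∞`),
defined as the supremum over finite increasing families of points of `S` of the sums of the
consecutive distances. -/
def varD (u : ℝ → X) (S : Set ℝ) : ℝ≥0∞ :=
  ⨆ (M : ℕ) (t : ℕ → ℝ)
    (_ : (∀ j, j ≤ M → t j ∈ S) ∧ ∀ j, j < M → t j < t (j + 1)),
    ∑ j ∈ Finset.range M, edist (u (t j)) (u (t (j + 1)))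

/-- Left limit of `u` at `t`, with the convention that it equals `u 0` for `t ≤ 0`
(curves are thought of as being defined on `[0,T]`). -/
def lLim (u : ℝ → X) (t : ℝ) : X :=
  if t ≤ 0 then u 0 else Function.leftLim u t

/-- Right limit of `u : [0,T] → X` at `t`, with the convention that it equals `u T` for
`t ≥ T`. -/
def rLim (u : ℝ → X) (T t : ℝ) : X :=
  if T ≤ t then u T else Function.rightLim u t

/-- The jump set of a curve `u : [0,T] → X`. -/
def jumpSet (u : ℝ → X) (T : ℝ) : Set ℝ :=
  {t | t ∈ Icc 0 T ∧ (lLim u t ≠ u t ∨ rLim u T t ≠ u t)}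

/-- The metric slope `|DE|(t,u)` of the energy functional `E`. -/
def slopeE (E : ℝ → X → ℝ) (t : ℝ) (u : X) : ℝ≥0∞ :=
  Filter.limsup (fun v => ENNReal.ofReal ((E t u - E t v) / dist u v)) (𝓝[≠] u)

/-- The metric derivative of a curve `θ : ℝ → X` (via `limUnder`: it coincides with the
metric derivative at every point where the latter exists). -/
def mder (θ : ℝ → X) (r : ℝ) : ℝ :=
  limUnder (𝓝[≠] r) fun s => dist (θ s) (θ r) / |s - r|

/-- `θ` is absolutely continuous on `[a,b]`. -/
def IsAC (θ : ℝ → X) (a b : ℝ) : Prop :=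
  ∃ m : ℝ → ℝ, IntegrableOn m (Icc a b) ∧
    ∀ s t : ℝ, a ≤ s → s ≤ t → t ≤ b → dist (θ s) (θ t) ≤ ∫ r in s..t, m r

/-- The viscous jump dissipation cost `v(t,u₋,u₊)`. -/
def vCost (E : ℝ → X → ℝ) (t : ℝ) (um up : X) : ℝ≥0∞ :=
  ⨅ (r₀ : ℝ) (r₁ : ℝ) (θ : ℝ → X)
    (_ : r₀ ≤ r₁ ∧ IsAC θ r₀ r₁ ∧ θ r₀ = um ∧ θ r₁ = up),
    ∫⁻ r in Ioc r₀ r₁, ENNReal.ofReal (mder θ r) * max (slopeE E t (θ r)) 1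

/-- The viscously corrected distance `D_μ(x,y) = d(x,y) + (μ/2) d(x,y)²`. -/
def Dmu (μ : ℝ) (x y : X) : ℝ := dist x y + μ / 2 * dist x y ^ 2

/-- The residual stability function `R_μ(t,x) = sup_y (E(t,x) − E(t,y) − D_μ(x,y))`. -/
def Rmu (E : ℝ → X → ℝ) (μ t : ℝ) (x : X) : ℝ≥0∞ :=
  ⨆ y : X, ENNReal.ofReal (E t x - E t y - Dmu μ x y)

/-- The holes of a compact set `K ⊆ ℝ` (connected components of `[inf K, sup K] ∖ K`),
identified with the pairs of their endpoints. -/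
def holes (K : Set ℝ) : Set (ℝ × ℝ) :=
  {p | p.1 ∈ K ∧ p.2 ∈ K ∧ p.1 < p.2 ∧ Ioo p.1 p.2 ∩ K = ∅}

/-- The visco-energetic transition cost `Trc_μ(t,θ,K)`. -/
def trCost (E : ℝ → X → ℝ) (μ t : ℝ) (θ : ℝ → X) (K : Set ℝ) : ℝ≥0∞ :=
  varD θ K
    + (∑' p : ↥(holes K),
        ENNReal.ofReal (μ / 2 * dist (θ (p : ℝ × ℝ).1) (θ (p : ℝ × ℝ).2) ^ 2))
    + ∑' s : ↥(K \ {sSup K}), Rmu E μ t (θ (s : ℝ))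

/-- The visco-energetic jump dissipation cost `c_μ(t,u₋,u₊)`. -/
def veCost (E : ℝ → X → ℝ) (μ : ℝ) (t : ℝ) (um up : X) : ℝ≥0∞ :=
  ⨅ (K : Set ℝ) (θ : ℝ → X)
    (_ : K.Nonempty ∧ IsCompact K ∧ ContinuousOn θ K ∧ θ (sInf K) = um ∧ θ (sSup K) = up),
    trCost E μ t θ K

/-- The jump contribution `Jmp_{Δ_e}(u;[t₀,t₁])` of the incremental cost associated with a
jump dissipation cost `e`. -/
def jmpVar (e : ℝ → X → X → ℝ≥0∞) (u : ℝ → X) (T t₀ t₁ : ℝ) : ℝ≥0∞ :=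
  (e t₀ (u t₀) (rLim u T t₀) - edist (u t₀) (rLim u T t₀))
    + (e t₁ (lLim u t₁) (u t₁) - edist (lLim u t₁) (u t₁))
    + ∑' t : ↥(jumpSet u T ∩ Ioo t₀ t₁),
        ((e (t : ℝ) (lLim u (t : ℝ)) (u (t : ℝ)) - edist (lLim u (t : ℝ)) (u (t : ℝ)))
          + (e (t : ℝ) (u (t : ℝ)) (rLim u T (t : ℝ))
              - edist (u (t : ℝ)) (rLim u T (t : ℝ))))

/-- The augmented total variation `Var_{d,e}(u;[t₀,t₁])`. -/
def varAug (e : ℝ → X → X → ℝ≥0∞) (u : ℝ → X) (T t₀ t₁ : ℝ) : ℝ≥0∞ :=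
  varD u (Icc t₀ t₁) + jmpVar e u T t₀ t₁

/-- Condition (E1): lower semicontinuity and compactness of the sublevel sets of the
perturbed functional `F(t,u) = E(t,u) + d(x₀,u)` on `[0,T] × X`. -/
def CondE1 (E : ℝ → X → ℝ) (T : ℝ) (x₀ : X) : Prop :=
  ∀ C : ℝ,
    LowerSemicontinuousOn (fun p : ℝ × X => E p.1 p.2)
      {p : ℝ × X | p.1 ∈ Icc 0 T ∧ E p.1 p.2 + dist x₀ p.2 ≤ C} ∧
    IsCompact {p : ℝ × X | p.1 ∈ Icc 0 T ∧ E p.1 p.2 + dist x₀ p.2 ≤ C}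

/-- Condition (E2): power control for the power functional `P`, with constant `CP`. -/
def CondE2 (E P : ℝ → X → ℝ) (T : ℝ) (x₀ : X) (CP : ℝ) : Prop :=
  0 < CP ∧
    ∀ t ∈ Icc (0 : ℝ) T, ∀ u : X,
      (P t u : EReal) ≤
          Filter.liminf (fun s => (((E t u - E s u) / (t - s) : ℝ) : EReal)) (𝓝[Ico 0 t] t) ∧
        Filter.limsup (fun s => (((E s u - E t u) / (s - t) : ℝ) : EReal)) (𝓝[Ioc t T] t) ≤
          (P t u : EReal) ∧
        |P t u| ≤ CP * (E t u + dist x₀ u)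

/-- Condition (E3): conditional upper semicontinuity of the power. -/
def CondE3 (E P : ℝ → X → ℝ) (T : ℝ) : Prop :=
  ∀ (tn : ℕ → ℝ) (un : ℕ → X) (t : ℝ) (u : X),
    (∀ n, tn n ∈ Icc (0 : ℝ) T) → t ∈ Icc (0 : ℝ) T →
    Tendsto tn atTop (𝓝 t) → Tendsto un atTop (𝓝 u) →
    Tendsto (fun n => E (tn n) (un n)) atTop (𝓝 (E t u)) →
    Filter.limsup (fun n => ((P (tn n) (un n) : ℝ) : EReal)) atTop ≤ (P t u : EReal)

/-- Condition (E3'): upper semicontinuity of the power and lower semicontinuity of the slope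
along sequences with bounded energy and slope. -/
def CondE3' (E P : ℝ → X → ℝ) (T : ℝ) (x₀ : X) : Prop :=
  ∀ (tn : ℕ → ℝ) (un : ℕ → X) (t : ℝ) (u : X),
    (∀ n, tn n ∈ Icc (0 : ℝ) T) → t ∈ Icc (0 : ℝ) T →
    Tendsto tn atTop (𝓝 t) → Tendsto un atTop (𝓝 u) →
    (∃ C : ℝ, ∀ n, E 0 (un n) + dist x₀ (un n) ≤ C) →
    (∃ S : ℝ≥0∞, S ≠ ⊤ ∧ ∀ n, slopeE E (tn n) (un n) ≤ S) →
    slopeE E t u ≤ Filter.liminf (fun n => slopeE E (tn n) (un n)) atTop ∧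
      Filter.limsup (fun n => ((P (tn n) (un n) : ℝ) : EReal)) atTop ≤ (P t u : EReal)

/-- Condition (E4): the chain-rule inequality. -/
def CondE4 (E P : ℝ → X → ℝ) (T : ℝ) : Prop :=
  ∀ u : ℝ → X, IsAC u 0 T →
    IsAC (fun t => E t (u t)) 0 T ∧
      ∀ᵐ t ∂(volume.restrict (Ioo (0 : ℝ) T)),
        DifferentiableAt ℝ (fun s => E s (u s)) t ∧
          ENNReal.ofReal (P t (u t) - deriv (fun s => E s (u s)) t) ≤
            ENNReal.ofReal (mder u t) * slopeE E t (u t)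

/-- Energetic solution of the rate-independent system `(X,E,d)`. -/
def IsEnergeticSol (E P : ℝ → X → ℝ) (T : ℝ) (u : ℝ → X) : Prop :=
  varD u (Icc 0 T) ≠ ⊤ ∧
    ∀ t ∈ Icc (0 : ℝ) T,
      (∀ v : X, E t (u t) ≤ E t v + dist (u t) v) ∧
        E t (u t) + (varD u (Icc 0 t)).toReal =
          E 0 (u 0) + ∫ s in (0 : ℝ)..t, P s (u s)

/-- Balanced Viscosity solution of the rate-independent system `(X,E,d)`. -/
def IsBVSol (E P : ℝ → X → ℝ) (T : ℝ) (u : ℝ → X) : Prop :=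
  varD u (Icc 0 T) ≠ ⊤ ∧
    (∀ t ∈ Icc (0 : ℝ) T \ jumpSet u T, slopeE E t (u t) ≤ 1) ∧
    ∀ t ∈ Icc (0 : ℝ) T,
      varAug (vCost E) u T 0 t ≠ ⊤ ∧
        E t (u t) + (varAug (vCost E) u T 0 t).toReal =
          E 0 (u 0) + ∫ s in (0 : ℝ)..t, P s (u s)

/-- μ-Visco-Energetic solution of the rate-independent system `(X,E,d)`. -/
def IsVESol (E P : ℝ → X → ℝ) (T μ : ℝ) (u : ℝ → X) : Prop :=
  varD u (Icc 0 T) ≠ ⊤ ∧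
    (∀ t ∈ Icc (0 : ℝ) T \ jumpSet u T, ∀ v : X, E t (u t) ≤ E t v + Dmu μ (u t) v) ∧
    ∀ t ∈ Icc (0 : ℝ) T,
      varAug (veCost E μ) u T 0 t ≠ ⊤ ∧
        E t (u t) + (varAug (veCost E μ) u T 0 t).toReal =
          E 0 (u 0) + ∫ s in (0 : ℝ)..t, P s (u s)

/-!
The augmented variation dominates the variation, so visco-energetic solutions satisfy the
inequality `≤` in the energy balance (E_d). Together with the power control (E2) and Grönwall's
inequality this gives bounds on energy and variation that are uniform in `μ`, and Helly's theorem
provides a pointwise convergent subsequence.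

At a time `s` that is not a jump time, visco-energetic stability is stability up to the error
`μ / 2 * dist (u s) v ^ 2`. The energy balance between `s` and `t`, in the limit `s ↑ t`, carries
this over to every `t > 0`. As `μ → 0` the error disappears, so the energies converge and the limit
curve is stable at every time. The inequality `≤` in (E_d) then passes to the limit by lower
semicontinuity of the variation and a reverse Fatou argument based on (E3).

The inequality `≥` follows from stability alone: `s ↦ E s (u s) + Var u [0, s]` becomes increasing
after a linear function is added, and at almost every time its derivative is at least `P s (u s)`.
-/

section BoundedVariation

lemma varD_eq_eVariationOn (u : ℝ → X) (S : Set ℝ) : varD u S = eVariationOn u S := by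
  apply le_antisymm
  · refine iSup_le fun M => iSup_le fun t => iSup_le fun ⟨htS, htlt⟩ => ?_
    have hmono : MonotoneOn t (Iic M) :=
      monotoneOn_of_le_succ ordConnected_Iic fun a _ _ ha => (htlt a (Nat.lt_of_succ_le ha)).le
    simpa only [edist_comm] using eVariationOn.sum_le_of_monotoneOn_Iic (f := u) hmono htS
  · rw [eVariationOn.eVariationOn_eq_strictMonoOn]
    refine iSup_le fun ⟨n, t, htmono, htS⟩ => ?_
    refine le_iSup_of_le n (le_iSup_of_le t (le_iSup_of_le ⟨htS, fun j hj => ?_⟩ ?_))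
    · exact htmono hj.le hj (Nat.lt_succ_self j)
    · simp only [edist_comm, le_refl]

variable {α : Type*} [LinearOrder α] {f : α → X} {s : Set α}

lemma dist_le_variationOnFromTo_sub (hf : LocallyBoundedVariationOn f s) {a b c : α}
    (ha : a ∈ s) (hb : b ∈ s) (hc : c ∈ s) (hbc : b ≤ c) :
    dist (f b) (f c) ≤ variationOnFromTo f s a c - variationOnFromTo f s a b := by
  rw [variationOnFromTo.sub_right hf ha hc hb, variationOnFromTo.eq_of_le f s hbc, dist_edist]
  exact ENNReal.toReal_mono (hf b c hb hc)
    (eVariationOn.edist_le f ⟨hb, left_mem_Icc.2 hbc⟩ ⟨hc, right_mem_Icc.2 hbc⟩)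

lemma eventually_lt_eVariationOn_toReal {ι : Type*} {l : Filter ι} {F : ι → α → X}
    (hF : ∀ x ∈ s, Tendsto (fun i => F i x) l (𝓝 (f x)))
    (hFs : ∀ i, BoundedVariationOn (F i) s) {c : ℝ} (hc : c < (eVariationOn f s).toReal) :
    ∀ᶠ i in l, c < (eVariationOn (F i) s).toReal := by
  rcases lt_or_ge c 0 with hc0 | hc0
  · exact .of_forall fun i => hc0.trans_le ENNReal.toReal_nonneg
  filter_upwards [eVariationOn.lowerSemicontinuous_aux hF
    (ENNReal.ofReal_lt_iff_lt_toReal hc0 (ENNReal.toReal_pos_iff.1 (hc0.trans_lt hc)).2.ne |>.2 hc)]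
    with i hi
  exact (ENNReal.ofReal_lt_iff_lt_toReal hc0 (hFs i)).1 hi

variable [TopologicalSpace α]

lemma continuousWithinAt_of_dist_le_sub {V : α → ℝ}
    (hfV : ∀ a ∈ s, ∀ b ∈ s, a ≤ b → dist (f a) (f b) ≤ V b - V a) {t : α} (ht : t ∈ s)
    (hV : ContinuousWithinAt V s t) : ContinuousWithinAt f s t := by
  have hlim : Tendsto (fun r => |V r - V t|) (𝓝[s] t) (𝓝 0) := by
    simpa using (hV.tendsto.sub_const (V t)).abs
  refine tendsto_iff_dist_tendsto_zero.2 (squeeze_zero' (.of_forall fun _ => dist_nonneg) ?_ hlim)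
  filter_upwards [self_mem_nhdsWithin] with r hr
  rcases le_total r t with hrt | htr
  · exact (hfV r hr t ht hrt).trans (abs_sub_comm (V r) (V t) ▸ le_abs_self _)
  · exact dist_comm (f t) (f r) ▸ (hfV t ht r hr htr).trans (le_abs_self _)

lemma countable_not_continuousWithinAt_of_locallyBoundedVariationOn [OrderTopology α]
    (hf : LocallyBoundedVariationOn f s) :
    {t ∈ s | ¬ContinuousWithinAt f s t}.Countable := by
  rcases s.eq_empty_or_nonempty with rfl | ⟨a, ha⟩
  · simp
  refine (variationOnFromTo.monotoneOn hf ha).countable_not_continuousWithinAt.mono ?_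
  exact fun t ⟨ht, hft⟩ => ⟨ht, fun hV => hft <| continuousWithinAt_of_dist_le_sub
    (fun b hb c hc => dist_le_variationOnFromTo_sub hf ha hb hc) ht hV⟩

end BoundedVariation

section Helly

lemma cauchySeq_of_forall_exists_eventually_dist_lt {x : ℕ → X}
    (h : ∀ ε > 0, ∃ y : ℕ → X, CauchySeq y ∧ ∀ᶠ n in atTop, dist (x n) (y n) < ε) :
    CauchySeq x := by
  refine Metric.cauchySeq_iff.2 fun ε hε => ?_
  obtain ⟨y, hy, hxy⟩ := h (ε / 3) (by positivity)
  obtain ⟨N, hN⟩ := Metric.cauchySeq_iff.1 hy (ε / 3) (by positivity)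
  obtain ⟨M, hM⟩ := eventually_atTop.1 hxy
  refine ⟨max N M, fun m hm n hn => ?_⟩
  calc dist (x m) (x n) ≤ dist (x m) (y m) + dist (y m) (y n) + dist (x n) (y n) := by
        rw [dist_comm (x n)]; exact dist_triangle4 _ _ _ _
    _ < ε / 3 + ε / 3 + ε / 3 := by
        gcongr
        exacts [hM m (le_of_max_le_right hm),
          hN m (le_of_max_le_left hm) n (le_of_max_le_left hn), hM n (le_of_max_le_right hn)]
    _ = ε := by ring

lemma exists_subseq_forall_mem_tendsto_of_countable {α : Type*} {K : Set X}
    (hK : IsCompact K) {D : Set α}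
    (hD : D.Countable) (f : ℕ → α → X) (hf : ∀ n t, f n t ∈ K) :
    ∃ φ : ℕ → ℕ, StrictMono φ ∧ ∃ g : α → X, ∀ t ∈ D, g t ∈ K ∧
      Tendsto (fun n => f (φ n) t) atTop (𝓝 (g t)) := by
  classical
  have : Countable D := hD.to_subtype
  obtain ⟨a, haK, φ, hφ, hlim⟩ := (isCompact_univ_pi fun _ : D => hK).tendsto_subseq
    (x := fun n (t : D) => f n t) fun n t _ => hf n t
  refine ⟨φ, hφ, fun t => if ht : t ∈ D then a ⟨t, ht⟩ else f 0 t, fun t ht => ?_⟩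
  simp only [ht, dite_true]
  exact ⟨haK ⟨t, ht⟩ (mem_univ _), tendsto_pi_nhds.1 hlim ⟨t, ht⟩⟩

lemma exists_subseq_tendsto_rat_of_monotone {V : ℕ → ℝ → ℝ} (hV : ∀ n, Monotone (V n)) {C : ℝ}
    (hC : ∀ n t, V n t ∈ Icc (-C) C) :
    ∃ φ : ℕ → ℕ, StrictMono φ ∧ ∃ g : ℝ → ℝ, Monotone g ∧
      ∀ q : ℚ, Tendsto (fun n => V (φ n) q) atTop (𝓝 (g q)) := by
  obtain ⟨φ, hφ, W, hW⟩ := exists_subseq_forall_mem_tendsto_of_countable isCompact_Icc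
    (countable_range ((↑) : ℚ → ℝ)) V hC
  have hWmono : MonotoneOn W (range ((↑) : ℚ → ℝ)) := fun p hp q hq hpq =>
    le_of_tendsto_of_tendsto' (hW p hp).2 (hW q hq).2 fun n => hV _ hpq
  obtain ⟨g, hg, hWg⟩ := hWmono.exists_monotone_extension
    ⟨-C, forall_mem_image.2 fun q hq => (hW q hq).1.1⟩
    ⟨C, forall_mem_image.2 fun q hq => (hW q hq).1.2⟩
  exact ⟨φ, hφ, g, hg, fun q => hWg (mem_range_self q) ▸ (hW q (mem_range_self q)).2⟩

lemma exists_rat_lt_rat_gt_sub_lt {g : ℝ → ℝ} {t : ℝ} (hg : ContinuousAt g t) {ε : ℝ}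
    (hε : 0 < ε) : ∃ p q : ℚ, p < t ∧ t < q ∧ g q - g p < ε := by
  obtain ⟨δ, hδ, hgδ⟩ := Metric.continuousAt_iff.1 hg (ε / 2) (by positivity)
  obtain ⟨p, hp, hpt⟩ := exists_rat_btwn (sub_lt_self t hδ)
  obtain ⟨q, htq, hq⟩ := exists_rat_btwn (lt_add_of_pos_right t hδ)
  have hgp := hgδ (show dist (p : ℝ) t < δ by rw [Real.dist_eq, abs_lt]; constructor <;> linarith)
  have hgq := hgδ (show dist (q : ℝ) t < δ by rw [Real.dist_eq, abs_lt]; constructor <;> linarith)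
  rw [Real.dist_eq, abs_lt] at hgp hgq
  exact ⟨p, q, hpt, htq, by linarith⟩

lemma cauchySeq_of_dist_le_sub_of_continuousAt {f : ℕ → ℝ → X} {V : ℕ → ℝ → ℝ}
    (hV : ∀ n, Monotone (V n)) (hfV : ∀ n a b, a ≤ b → dist (f n a) (f n b) ≤ V n b - V n a)
    {g : ℝ → ℝ} (hVg : ∀ q : ℚ, Tendsto (fun n => V n q) atTop (𝓝 (g q)))
    (hf : ∀ q : ℚ, CauchySeq fun n => f n q) {t : ℝ} (hg : ContinuousAt g t) :
    CauchySeq fun n => f n t := by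
  refine cauchySeq_of_forall_exists_eventually_dist_lt fun ε hε => ?_
  obtain ⟨p, q, hpt, htq, hpq⟩ := exists_rat_lt_rat_gt_sub_lt hg hε
  refine ⟨fun n => f n p, hf p, ?_⟩
  filter_upwards [((hVg q).sub (hVg p)).eventually_lt_const hpq] with n hn
  calc dist (f n t) (f n p) ≤ V n t - V n p := dist_comm (f n t) _ ▸ hfV n p t hpt.le
    _ ≤ V n q - V n p := sub_le_sub_right (hV n htq.le) _
    _ < ε := hn

theorem exists_subseq_forall_tendsto_of_eVariationOn_le {K : Set X} (hK : IsCompact K)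
    {f : ℕ → ℝ → X} (hfK : ∀ n t, f n t ∈ K) {C : NNReal}
    (hfC : ∀ n, eVariationOn (f n) univ ≤ C) :
    ∃ φ : ℕ → ℕ, StrictMono φ ∧ ∃ u : ℝ → X, ∀ t, Tendsto (fun n => f (φ n) t) atTop (𝓝 (u t)) := by
  have hbv : ∀ n, BoundedVariationOn (f n) univ := fun n =>
    ne_top_of_le_ne_top ENNReal.coe_ne_top (hfC n)
  let V : ℕ → ℝ → ℝ := fun n => variationOnFromTo (f n) univ 0
  have hVmono : ∀ n, Monotone (V n) := fun n => monotoneOn_univ.1 <|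
    variationOnFromTo.monotoneOn (hbv n).locallyBoundedVariationOn (mem_univ 0)
  have hVC : ∀ n t, V n t ∈ Icc (-(C : ℝ)) C := fun n t => abs_le.1 <|
    (variationOnFromTo.abs_le_eVariationOn (hbv n)).trans
      (ENNReal.toReal_mono ENNReal.coe_ne_top (hfC n))
  have hfV : ∀ n a b, a ≤ b → dist (f n a) (f n b) ≤ V n b - V n a := fun n a b =>
    dist_le_variationOnFromTo_sub (hbv n).locallyBoundedVariationOn (mem_univ 0) (mem_univ a)
      (mem_univ b)
  obtain ⟨φ, hφ, g, hg, hVg⟩ := exists_subseq_tendsto_rat_of_monotone hVmono hVC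
  obtain ⟨ψ, hψ, v, hv⟩ := exists_subseq_forall_mem_tendsto_of_countable hK
    ((countable_range ((↑) : ℚ → ℝ)).union hg.countable_not_continuousAt)
    (fun n => f (φ n)) fun n t => hfK _ t
  have hconv : ∀ t, ∃ x, Tendsto (fun n => f (φ (ψ n)) t) atTop (𝓝 x) := by
    intro t
    by_cases hgt : ContinuousAt g t
    · have hcauchy := cauchySeq_of_dist_le_sub_of_continuousAt (fun n => hVmono (φ (ψ n)))
        (fun n => hfV (φ (ψ n))) (fun q => (hVg q).comp hψ.tendsto_atTop)
        (fun q => (hv q (.inl (mem_range_self q))).2.cauchySeq) hgt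
      obtain ⟨x, -, hx⟩ := cauchySeq_tendsto_of_isComplete hK.isComplete (fun n => hfK _ t) hcauchy
      exact ⟨x, hx⟩
    · exact ⟨v t, (hv t (.inr hgt)).2⟩
  choose u hu using hconv
  exact ⟨φ ∘ ψ, hφ.comp hψ, u, hu⟩

theorem exists_subseq_tendsto_Icc_of_eVariationOn_le {K : Set X} (hK : IsCompact K) {a b : ℝ}
    (hab : a ≤ b) {f : ℕ → ℝ → X} (hfK : ∀ n, ∀ t ∈ Icc a b, f n t ∈ K) {C : NNReal}
    (hfC : ∀ n, eVariationOn (f n) (Icc a b) ≤ C) :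
    ∃ φ : ℕ → ℕ, StrictMono φ ∧ ∃ u : ℝ → X, eVariationOn u (Icc a b) ≤ C ∧
      ∀ t ∈ Icc a b, Tendsto (fun n => f (φ n) t) atTop (𝓝 (u t)) := by
  let π : ℝ → ℝ := fun t => projIcc a b hab t
  have hπ : ∀ t, π t ∈ Icc a b := fun t => (projIcc a b hab t).2
  obtain ⟨φ, hφ, u, hu⟩ := exists_subseq_forall_tendsto_of_eVariationOn_le hK
    (f := fun n => f n ∘ π) (fun n t => hfK n _ (hπ t)) fun n =>
      (eVariationOn.comp_le_of_monotoneOn (f n) π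
        ((monotone_projIcc hab).monotoneOn univ) fun t _ => hπ t).trans (hfC n)
  have hlim : ∀ t ∈ Icc a b, Tendsto (fun n => f (φ n) t) atTop (𝓝 (u t)) := fun t ht => by
    simpa only [Function.comp_apply, π, projIcc_of_mem hab ht] using hu t
  refine ⟨φ, hφ, u, le_of_not_gt fun h => ?_, hlim⟩
  obtain ⟨n, hn⟩ := (eVariationOn.lowerSemicontinuous_aux hlim h).exists
  exact hn.not_ge (hfC (φ n))

end Helly

section RealAnalysis

lemma hasDerivWithinAt_integral_Ici_of_continuousOn {a T : ℝ} {f : ℝ → ℝ}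
    (hf : ContinuousOn f (Icc a T)) {s : ℝ} (hs : s ∈ Ico a T) :
    HasDerivWithinAt (fun r => ∫ x in a..r, f x) (f s) (Ici s) s := by
  have hmem : Icc a T ∈ 𝓝[>] s := mem_of_superset (Ioc_mem_nhdsGT hs.2) fun r hr =>
    ⟨hs.1.trans hr.1.le, hr.2⟩
  refine intervalIntegral.integral_hasDerivWithinAt_right ?_
    ⟨Icc a T, hmem, hf.aestronglyMeasurable measurableSet_Icc⟩
    ((hf s ⟨hs.1, hs.2.le⟩).mono_of_mem_nhdsWithin hmem)
  exact (hf.mono (Icc_subset_Icc_right hs.2.le)).intervalIntegrable_of_Icc hs.1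

lemma continuousOn_add_integral {a T : ℝ} (haT : a ≤ T) {f : ℝ → ℝ}
    (hf : IntervalIntegrable f volume a T) (A : ℝ) :
    ContinuousOn (fun s => A + ∫ r in a..s, f r) (Icc a T) := by
  rw [← uIcc_of_le haT]
  exact continuousOn_const.add
    (intervalIntegral.continuousOn_primitive_interval' hf left_mem_uIcc)

lemma le_mul_exp_of_le_add_integral_of_continuousOn {a T A K : ℝ} {G : ℝ → ℝ} (hK : 0 ≤ K)
    (hG : ContinuousOn G (Icc a T)) (hGle : ∀ s ∈ Icc a T, G s ≤ A + ∫ r in a..s, K * G r)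
    {t : ℝ} (ht : t ∈ Icc a T) : G t ≤ A * Real.exp (K * (t - a)) := by
  have haT : a ≤ T := ht.1.trans ht.2
  have hKG : ContinuousOn (fun s => K * G s) (Icc a T) := continuousOn_const.mul hG
  have hgronwall := le_gronwallBound_of_liminf_deriv_right_le
    (f := fun s => A + ∫ r in a..s, K * G r) (f' := fun s => K * G s) (δ := A) (K := K) (ε := 0)
    (continuousOn_add_integral haT (hKG.intervalIntegrable_of_Icc haT) A)
    (fun s hs r hr =>
      ((hasDerivWithinAt_integral_Ici_of_continuousOn hKG hs).const_add A).liminf_right_slope_le hr)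
    (by simp)
    (fun s hs => by simpa using mul_le_mul_of_nonneg_left (hGle s ⟨hs.1, hs.2.le⟩) hK) t ht
  rw [gronwallBound_ε0] at hgronwall
  exact (hGle t ht).trans hgronwall

lemma le_mul_exp_of_le_add_integral {a T A K : ℝ} {b g : ℝ → ℝ} (hK : 0 ≤ K)
    (hg : IntervalIntegrable g volume a T) (hb : ∀ s ∈ Icc a T, b s ≤ A + ∫ r in a..s, g r)
    (hgb : ∀ s ∈ Icc a T, g s ≤ K * b s) {t : ℝ} (ht : t ∈ Icc a T) :
    b t ≤ A * Real.exp (K * (t - a)) := by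
  have haT : a ≤ T := ht.1.trans ht.2
  have hG := continuousOn_add_integral haT hg A
  refine (hb t ht).trans
    (le_mul_exp_of_le_add_integral_of_continuousOn hK hG (fun s hs => ?_) ht)
  have hsub : uIcc a s ⊆ uIcc a T := by
    rw [uIcc_of_le hs.1, uIcc_of_le haT]; exact Icc_subset_Icc_right hs.2
  have hKG := (continuousOn_const (c := K)).mul hG |>.intervalIntegrable_of_Icc haT (μ := volume)
  refine add_le_add_right (intervalIntegral.integral_mono_on hs.1 (hg.mono_set hsub)
    (hKG.mono_set hsub) fun r hr => ?_) A
  have hrT : r ∈ Icc a T := ⟨hr.1, hr.2.trans hs.2⟩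
  exact (hgb r hrT).trans (mul_le_mul_of_nonneg_left (hb r hrT) hK)

lemma le_mul_exp_of_forall_eventually_sub_le {a b K : ℝ} (hab : a ≤ b) {G : ℝ → ℝ}
    (hG : ContinuousOn G (Icc a b))
    (hGK : ∀ t ∈ Ioc a b, ∀ r > K * G t, ∀ᶠ s in 𝓝[<] t, G s - G t < r * (t - s)) :
    G a ≤ G b * Real.exp (K * (b - a)) := by
  have hmaps : MapsTo (fun τ => b - τ) (Icc 0 (b - a)) (Icc a b) := fun τ hτ =>
    ⟨by linarith [hτ.2], by linarith [hτ.1]⟩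
  have hgronwall := le_gronwallBound_of_liminf_deriv_right_le
    (f := fun τ => G (b - τ)) (f' := fun τ => K * G (b - τ)) (δ := G b) (K := K) (ε := 0)
    (hG.comp (by fun_prop) hmaps) (fun τ hτ r hr => ?_) (by simp) (by simp)
    (b - a) (right_mem_Icc.2 (sub_nonneg.2 hab))
  · simpa [gronwallBound_ε0] using hgronwall
  · have hreflect : Tendsto (fun z => b - z) (𝓝[>] τ) (𝓝[<] (b - τ)) :=
      tendsto_nhdsWithin_iff.2 ⟨(Continuous.tendsto (by fun_prop) τ).mono_left nhdsWithin_le_nhds,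
        eventually_mem_nhdsWithin.mono fun z hz => sub_lt_sub_left hz b⟩
    refine Eventually.frequently ?_
    filter_upwards [hreflect.eventually (hGK (b - τ) ⟨by linarith [hτ.2], by linarith [hτ.1]⟩ r hr),
      self_mem_nhdsWithin] with z hz hτz
    rw [inv_mul_lt_iff₀ (sub_pos.2 hτz)]
    linarith

lemma eventually_integral_lt_of_forall_eventually_lt {α ι : Type*} [MeasurableSpace α]
    {ν : Measure α} {l : Filter ι} [l.IsCountablyGenerated] {f : ι → α → ℝ} {g bound : α → ℝ}
    (hf : ∀ i, Integrable (f i) ν) (hg : Integrable g ν) (hbound : Integrable bound ν)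
    (hle : ∀ i, ∀ᵐ x ∂ν, f i x ≤ bound x) (hlim : ∀ᵐ x ∂ν, ∀ c > g x, ∀ᶠ i in l, f i x < c)
    {c : ℝ} (hc : ∫ x, g x ∂ν < c) : ∀ᶠ i in l, ∫ x, f i x ∂ν < c := by
  have hpos : ∀ i, Integrable (fun x => max (f i x - g x) 0) ν := fun i => ((hf i).sub hg).pos_part
  have hto : Tendsto (fun i => ∫ x, max (f i x - g x) 0 ∂ν) l (𝓝 (∫ _, (0 : ℝ) ∂ν)) := by
    refine tendsto_integral_filter_of_dominated_convergence (fun x => max (bound x - g x) 0)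
      (.of_forall fun i => (hpos i).aestronglyMeasurable) (.of_forall fun i => ?_)
      (hbound.sub hg).pos_part ?_
    · filter_upwards [hle i] with x hx
      rw [Real.norm_eq_abs, abs_of_nonneg (le_max_right _ _)]
      gcongr
    · filter_upwards [hlim] with x hx
      refine tendsto_order.2 ⟨fun a ha => .of_forall fun i => ha.trans_le (le_max_right _ _),
        fun a ha => ?_⟩
      filter_upwards [hx (g x + a) (lt_add_of_pos_right _ ha)] with i hi
      exact max_lt (sub_lt_iff_lt_add'.2 hi) ha
  rw [integral_zero] at hto
  filter_upwards [hto.eventually_lt_const (sub_pos.2 hc)] with i hi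
  calc ∫ x, f i x ∂ν ≤ ∫ x, (g x + max (f i x - g x) 0) ∂ν := by
        refine integral_mono (hf i) (hg.add (hpos i)) fun x => ?_
        linarith [le_max_left (f i x - g x) 0]
    _ = ∫ x, g x ∂ν + ∫ x, max (f i x - g x) 0 ∂ν := integral_add hg (hpos i)
    _ < c := by linarith

lemma le_deriv_of_forall_lt_eventually_le {h : ℝ → ℝ} {s c : ℝ} (hh : DifferentiableAt ℝ h s)
    (hc : ∀ r < c, ∀ᶠ σ in 𝓝[<] s, r * (s - σ) ≤ h s - h σ) : c ≤ deriv h s := by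
  have hslope : Tendsto (slope h s) (𝓝[<] s) (𝓝 (deriv h s)) :=
    hh.hasDerivAt.tendsto_slope.mono_left (nhdsWithin_mono _ fun _ hσ => ne_of_lt hσ)
  refine le_of_forall_lt_imp_le_of_dense fun r hr => ge_of_tendsto hslope ?_
  filter_upwards [hc r hr, self_mem_nhdsWithin] with σ hσ hσs
  rwa [slope_comm, slope_def_field, le_div_iff₀ (sub_pos.2 hσs)]

lemma integral_le_sub_of_monotoneOn {a b : ℝ} (hab : a ≤ b) {h g : ℝ → ℝ}
    (hh : MonotoneOn h (Icc a b)) (hg : IntervalIntegrable g volume a b)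
    (hgh : ∀ s ∈ Ioo a b, ∀ r < g s, ∀ᶠ σ in 𝓝[<] s, r * (s - σ) ≤ h s - h σ) :
    ∫ s in a..b, g s ≤ h b - h a := by
  have hh' : MonotoneOn h (uIcc a b) := by rwa [uIcc_of_le hab]
  have hderiv := hh'.intervalIntegral_deriv_mem_uIcc
  rw [uIcc_of_le (sub_nonneg.2 (hh (left_mem_Icc.2 hab) (right_mem_Icc.2 hab) hab))] at hderiv
  refine le_trans (intervalIntegral.integral_mono_ae_restrict hab hg
    hh'.intervalIntegrable_deriv ?_) hderiv.2
  rw [EventuallyLE, ← restrict_Ioo_eq_restrict_Icc, ae_restrict_iff' measurableSet_Ioo]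
  filter_upwards [hh.ae_differentiableWithinAt_of_mem] with s hdiff hs
  exact le_deriv_of_forall_lt_eventually_le
    ((hdiff (Ioo_subset_Icc_self hs)).differentiableAt (Icc_mem_nhds hs.1 hs.2)) (hgh s hs)

lemma integral_le_sub_of_monotoneOn_add_mul {a b L : ℝ} (hab : a ≤ b) {h g : ℝ → ℝ}
    (hh : MonotoneOn (fun s => h s + L * s) (Icc a b)) (hg : IntervalIntegrable g volume a b)
    (hgh : ∀ s ∈ Ioo a b, ∀ r < g s, ∀ᶠ σ in 𝓝[<] s, r * (s - σ) ≤ h s - h σ) :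
    ∫ s in a..b, g s ≤ h b - h a := by
  have hshift := integral_le_sub_of_monotoneOn hab hh (hg.add intervalIntegrable_const)
    fun s hs r hr => by
      filter_upwards [hgh s hs (r - L) (sub_lt_iff_lt_add.2 hr)] with σ hσ
      linarith
  rw [intervalIntegral.integral_add hg intervalIntegrable_const,
    intervalIntegral.integral_const, smul_eq_mul] at hshift
  linarith

lemma measurable_of_forall_eventually_lt_inf_comap {Z : Type*} [TopologicalSpace Z]
    [MeasurableSpace Z] [OpensMeasurableSpace Z] {e f : Z → ℝ} (he : Measurable e)
    (hf : ∀ z, ∀ c > f z, ∀ᶠ w in 𝓝 z ⊓ comap e (𝓝 (e z)), f w < c) : Measurable f := by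
  refine measurable_of_Iio fun c => ?_
  let Γ : Z → Z × ℝ := fun z => (z, e z)
  have hnhds : ∀ z, @nhds Z (.induced Γ inferInstance) z = 𝓝 z ⊓ comap e (𝓝 (e z)) := fun z => by
    rw [nhds_induced, nhds_prod_eq, comap_prod]
    simp only [Γ, Function.comp_def, comap_id']
  obtain ⟨V, hV, hVf⟩ : IsOpen[.induced Γ inferInstance] (f ⁻¹' Iio c) :=
    (@isOpen_iff_mem_nhds Z (.induced Γ inferInstance) (f ⁻¹' Iio c)).2 fun z hz => by
      rw [hnhds]; exact hf z c hz
  exact hVf ▸ (measurable_id.prodMk he) hV.measurableSet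

end RealAnalysis

section Energy

variable {E P : ℝ → X → ℝ} {T CP : ℝ} {x₀ : X}

lemma CondE1.lowerSemicontinuousOn (hE1 : CondE1 E T x₀) :
    LowerSemicontinuousOn (fun p : ℝ × X => E p.1 p.2) (Icc 0 T ×ˢ univ) := by
  intro p _ c hc
  obtain ⟨hlsc, hcompact⟩ := hE1 (c + (dist x₀ p.2 + 1))
  set S := {q : ℝ × X | q.1 ∈ Icc 0 T ∧ E q.1 q.2 + dist x₀ q.2 ≤ c + (dist x₀ p.2 + 1)}
  have hS : ∀ᶠ q in 𝓝 p, q ∈ S → c < E q.1 q.2 := by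
    by_cases hpS : p ∈ S
    · exact eventually_nhdsWithin_iff.1 (hlsc p hpS c hc)
    · filter_upwards [hcompact.isClosed.isOpen_compl.mem_nhds hpS] with q hqS hq
      exact absurd hq hqS
  have hdist : ∀ᶠ q : ℝ × X in 𝓝 p, dist x₀ q.2 < dist x₀ p.2 + 1 :=
    (Continuous.tendsto (by fun_prop) p).eventually_lt_const (lt_add_one _)
  filter_upwards [nhdsWithin_le_nhds hS, nhdsWithin_le_nhds hdist, self_mem_nhdsWithin]
    with q hqS hq hqT
  by_contra! hqc
  exact hqc.not_gt (hqS ⟨hqT.1, add_le_add hqc hq.le⟩)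

lemma CondE1.eventually_lt (hE1 : CondE1 E T x₀) {ι : Type*} {l : Filter ι} {τ : ι → ℝ}
    {ξ : ι → X} {t : ℝ} {x : X} (hτT : ∀ᶠ i in l, τ i ∈ Icc 0 T) (ht : t ∈ Icc 0 T)
    (hτ : Tendsto τ l (𝓝 t)) (hξ : Tendsto ξ l (𝓝 x)) {c : ℝ} (hc : c < E t x) :
    ∀ᶠ i in l, c < E (τ i) (ξ i) := by
  have hlim : Tendsto (fun i => (τ i, ξ i)) l (𝓝[Icc 0 T ×ˢ univ] (t, x)) :=
    tendsto_nhdsWithin_iff.2 ⟨hτ.prodMk_nhds hξ, hτT.mono fun _ hi => ⟨hi, trivial⟩⟩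
  exact hlim.eventually (hE1.lowerSemicontinuousOn (t, x) ⟨ht, trivial⟩ c hc)

lemma CondE1.exists_isCompact (hE1 : CondE1 E T x₀) (C : ℝ) :
    ∃ K : Set X, IsCompact K ∧ ∀ t ∈ Icc 0 T, ∀ x, E t x + dist x₀ x ≤ C → x ∈ K :=
  ⟨_, (hE1 C).2.image continuous_snd, fun t ht x hx => ⟨(t, x), ⟨ht, hx⟩, rfl⟩⟩

lemma CondE1.exists_dist_le (hE1 : CondE1 E T x₀) (C : ℝ) (v : X) :
    ∃ R, ∀ t ∈ Icc 0 T, ∀ x, E t x + dist x₀ x ≤ C → dist x v ≤ R := by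
  obtain ⟨K, hK, hCK⟩ := hE1.exists_isCompact C
  obtain ⟨R, hR⟩ := hK.isBounded.subset_closedBall v
  exact ⟨R, fun t ht x hx => hR (hCK t ht x hx)⟩

lemma CondE2.add_dist_nonneg (hE2 : CondE2 E P T x₀ CP) {t : ℝ} (ht : t ∈ Icc 0 T) (x : X) :
    0 ≤ E t x + dist x₀ x :=
  nonneg_of_mul_nonneg_right ((abs_nonneg _).trans (hE2.2 t ht x).2.2) hE2.1

lemma CondE2.abs_power_le (hE2 : CondE2 E P T x₀ CP) {t : ℝ} (ht : t ∈ Icc 0 T) {x : X} {C : ℝ}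
    (hC : E t x + dist x₀ x ≤ C) : |P t x| ≤ CP * C :=
  (hE2.2 t ht x).2.2.trans (mul_le_mul_of_nonneg_left hC hE2.1.le)

lemma CondE2.eventually_sub_lt (hE2 : CondE2 E P T x₀ CP) {t : ℝ} (ht : t ∈ Icc 0 T) {x : X}
    {r : ℝ} (hr : P t x < r) : ∀ᶠ s in 𝓝[Ioc t T] t, E s x - E t x < r * (s - t) := by
  filter_upwards [eventually_lt_of_limsup_lt
    ((hE2.2 t ht x).2.1.trans_lt (EReal.coe_lt_coe_iff.2 hr)), self_mem_nhdsWithin] with s hs hts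
  rwa [EReal.coe_lt_coe_iff, div_lt_iff₀ (sub_pos.2 hts.1)] at hs

lemma CondE2.eventually_lt_sub (hE2 : CondE2 E P T x₀ CP) {t : ℝ} (ht : t ∈ Icc 0 T) {x : X}
    {r : ℝ} (hr : r < P t x) : ∀ᶠ s in 𝓝[Ico 0 t] t, r * (t - s) < E t x - E s x := by
  filter_upwards [eventually_lt_of_lt_liminf
    ((EReal.coe_lt_coe_iff.2 hr).trans_le (hE2.2 t ht x).1), self_mem_nhdsWithin] with s hs hst
  rwa [EReal.coe_lt_coe_iff, lt_div_iff₀ (sub_pos.2 hst.2)] at hs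

lemma CondE2.eventually_lt (hE2 : CondE2 E P T x₀ CP) {t : ℝ} (ht : t ∈ Icc 0 T) {x : X} {c : ℝ}
    (hc : E t x < c) : ∀ᶠ s in 𝓝[Icc 0 T] t, E s x < c := by
  have hline : ∀ r : ℝ, ∀ᶠ s in 𝓝 t, E t x + r * (s - t) < c := fun r =>
    (Continuous.tendsto (by fun_prop) t).eventually_lt_const (by simpa using hc)
  rw [← Icc_union_Ioc_eq_Icc ht.1 ht.2, ← Ico_union_right ht.1, nhdsWithin_union,
    nhdsWithin_union, nhdsWithin_singleton]
  refine eventually_sup.2 ⟨eventually_sup.2 ⟨?_, eventually_pure.2 hc⟩, ?_⟩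
  · filter_upwards [hE2.eventually_lt_sub ht (sub_one_lt (P t x)),
      nhdsWithin_le_nhds (hline (P t x - 1))] with s hs hsc
    linarith
  · filter_upwards [hE2.eventually_sub_lt ht (lt_add_one (P t x)),
      nhdsWithin_le_nhds (hline (P t x + 1))] with s hs hsc
    linarith

lemma CondE2.continuousOn (hE2 : CondE2 E P T x₀ CP) (hE1 : CondE1 E T x₀) (x : X) :
    ContinuousOn (fun s => E s x) (Icc 0 T) := fun _ ht =>
  tendsto_order.2 ⟨fun _ hc => hE1.eventually_lt eventually_mem_nhdsWithin ht nhdsWithin_le_nhds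
    tendsto_const_nhds hc, fun _ hc => hE2.eventually_lt ht hc⟩

lemma CondE2.add_dist_le_mul_exp (hE2 : CondE2 E P T x₀ CP) (hE1 : CondE1 E T x₀) {s t : ℝ}
    (hs : 0 ≤ s) (hst : s ≤ t) (ht : t ≤ T) (x : X) :
    E s x + dist x₀ x ≤ (E t x + dist x₀ x) * Real.exp (CP * (t - s)) := by
  refine le_mul_exp_of_forall_eventually_sub_le (G := fun r => E r x + dist x₀ x) hst
    (((hE2.continuousOn hE1 x).mono (Icc_subset_Icc hs ht)).add continuousOn_const)
    fun r hr c hc => ?_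
  have hrT : r ∈ Icc 0 T := ⟨hs.trans hr.1.le, hr.2.trans ht⟩
  have hpower := hE2.eventually_lt_sub hrT
    (neg_lt.1 ((neg_le_abs _).trans_lt ((hE2.abs_power_le hrT le_rfl).trans_lt hc)))
  rw [nhdsWithin_Ico_eq_nhdsLT (hs.trans_lt hr.1)] at hpower
  filter_upwards [hpower] with σ hσ
  linarith

lemma CondE2.sub_le (hE2 : CondE2 E P T x₀ CP) (hE1 : CondE1 E T x₀) {s t : ℝ}
    (hs : 0 ≤ s) (hst : s ≤ t) (ht : t ≤ T) {x : X} {C : ℝ} (hC : E t x + dist x₀ x ≤ C) :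
    E s x - E t x ≤ C * CP * Real.exp (CP * T) * (t - s) := by
  have hF := hE2.add_dist_nonneg (⟨hs.trans hst, ht⟩ : t ∈ Icc 0 T) x
  have hCP := hE2.1
  have hr : 0 ≤ CP * (t - s) := mul_nonneg hCP.le (sub_nonneg.2 hst)
  have hrT : CP * (t - s) ≤ CP * T := by gcongr; linarith
  have hexp : Real.exp (CP * (t - s)) - 1 ≤ CP * (t - s) * Real.exp (CP * (t - s)) := by
    have := mul_le_mul_of_nonneg_right (Real.one_sub_le_exp_neg (CP * (t - s)))
      (Real.exp_pos (CP * (t - s))).le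
    rw [← Real.exp_add, neg_add_cancel, Real.exp_zero] at this
    linarith
  calc E s x - E t x
      ≤ (E t x + dist x₀ x) * (Real.exp (CP * (t - s)) - 1) := by
        linarith [hE2.add_dist_le_mul_exp hE1 hs hst ht x]
    _ ≤ C * (CP * (t - s) * Real.exp (CP * T)) := by
        refine mul_le_mul hC (hexp.trans ?_) (sub_nonneg.2 (Real.one_le_exp hr)) (hF.trans hC)
        gcongr
    _ = C * CP * Real.exp (CP * T) * (t - s) := by ring

lemma CondE3.eventually_lt (hE3 : CondE3 E P T) {ι : Type*} {l : Filter ι}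
    [l.IsCountablyGenerated] {τ : ι → ℝ} {ξ : ι → X} {t : ℝ} {x : X}
    (hτT : ∀ᶠ i in l, τ i ∈ Icc 0 T) (ht : t ∈ Icc 0 T) (hτ : Tendsto τ l (𝓝 t))
    (hξ : Tendsto ξ l (𝓝 x)) (hE : Tendsto (fun i => E (τ i) (ξ i)) l (𝓝 (E t x))) {c : ℝ}
    (hc : P t x < c) : ∀ᶠ i in l, P (τ i) (ξ i) < c := by
  by_contra hcon
  obtain ⟨i, hil, hi⟩ :=
    exists_seq_forall_of_frequently ((not_eventually.1 hcon).and_eventually hτT)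
  have hlimsup := hE3 _ _ t x (fun n => (hi n).2) ht (hτ.comp hil) (hξ.comp hil) (hE.comp hil)
  have hle : (c : EReal) ≤ limsup (fun n => (P (τ (i n)) (ξ (i n)) : EReal)) atTop :=
    le_limsup_of_frequently_le
      (.of_forall fun n => EReal.coe_le_coe_iff.2 (not_lt.1 (hi n).1))
  exact hc.not_ge (EReal.coe_le_coe_iff.1 (hle.trans hlimsup))

lemma CondE3.measurable_power (hE3 : CondE3 E P T) (hE1 : CondE1 E T x₀) {Z : Type*}
    [TopologicalSpace Z] [FirstCountableTopology Z] [MeasurableSpace Z] [OpensMeasurableSpace Z]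
    {τ : Z → ℝ} {ξ : Z → X} (hτ : Continuous τ) (hτT : ∀ z, τ z ∈ Icc 0 T) (hξ : Continuous ξ) :
    Measurable fun z => P (τ z) (ξ z) := by
  have henergy : LowerSemicontinuous fun z => E (τ z) (ξ z) := fun z _ hc =>
    hE1.eventually_lt (.of_forall hτT) (hτT z) (hτ.tendsto z) (hξ.tendsto z) hc
  exact measurable_of_forall_eventually_lt_inf_comap henergy.measurable fun z _ hc =>
    hE3.eventually_lt (.of_forall hτT) (hτT z) ((hτ.tendsto z).mono_left inf_le_left)
      ((hξ.tendsto z).mono_left inf_le_left) (tendsto_comap.mono_left inf_le_right) hc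

lemma CondE3.aemeasurable_power (hE3 : CondE3 E P T) (hE1 : CondE1 E T x₀) {u : ℝ → X}
    (hu : BoundedVariationOn u (Icc 0 T)) :
    AEMeasurable (fun s => P s (u s)) (volume.restrict (Icc 0 T)) := by
  have hcount := countable_not_continuousWithinAt_of_locallyBoundedVariationOn
    hu.locallyBoundedVariationOn
  set D := {t ∈ Icc 0 T | ¬ContinuousWithinAt u (Icc 0 T) t}
  have hcont : ContinuousOn u (Icc 0 T \ D) := fun t ht =>
    (not_not.1 fun h => ht.2 ⟨ht.1, h⟩ : ContinuousWithinAt u (Icc 0 T) t).mono sdiff_subset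
  rw [← Measure.restrict_congr_set (sdiff_null_ae_eq_self (hcount.measure_zero volume))]
  exact aemeasurable_restrict_of_measurable_subtype
    (measurableSet_Icc.diff hcount.measurableSet)
    (hE3.measurable_power hE1 continuous_subtype_val (fun z => z.2.1) hcont.domRestrict)

lemma CondE3.intervalIntegrable_power (hE3 : CondE3 E P T) (hE1 : CondE1 E T x₀)
    (hE2 : CondE2 E P T x₀ CP) {u : ℝ → X} (hu : BoundedVariationOn u (Icc 0 T)) {C : ℝ}
    (hC : ∀ s ∈ Icc 0 T, E s (u s) + dist x₀ (u s) ≤ C) {a b : ℝ} (ha : a ∈ Icc 0 T)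
    (hb : b ∈ Icc 0 T) : IntervalIntegrable (fun s => P s (u s)) volume a b := by
  have hint : IntegrableOn (fun s => P s (u s)) (Icc 0 T) volume :=
    .of_bound measure_Icc_lt_top (hE3.aemeasurable_power hE1 hu).aestronglyMeasurable (CP * C)
      ((ae_restrict_iff' measurableSet_Icc).2
        (.of_forall fun s hs => hE2.abs_power_le hs (hC s hs)))
  exact (hint.mono_set (OrdConnected.uIcc_subset ordConnected_Icc ha hb)).intervalIntegrable

end Energy

section EnergyInequality

variable {E P : ℝ → X → ℝ} {T CP : ℝ} {x₀ : X}

/-- The stability condition (S_d) for the state `x` at time `t`. -/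
def IsStable (E : ℝ → X → ℝ) (t : ℝ) (x : X) : Prop :=
  ∀ v, E t x ≤ E t v + dist x v

/-- The stability condition (S_d) for a family of states at time `t` up to errors, possibly
depending on the competitor `v`, that vanish along the filter `l`. -/
def IsAsymptoticallyStable {ι : Type*} (E : ℝ → X → ℝ) (t : ℝ) (l : Filter ι) (ξ : ι → X) : Prop :=
  ∀ v, ∃ ε : ι → ℝ, Tendsto ε l (𝓝 0) ∧ ∀ i, E t (ξ i) ≤ E t v + dist (ξ i) v + ε i

/-- Curves of bounded variation satisfying the inequality `≤` in the energy balance (E_d); it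
holds for energetic solutions and for visco-energetic solutions alike. -/
structure SatisfiesEnergyInequality (E P : ℝ → X → ℝ) (T : ℝ) (u : ℝ → X) : Prop where
  boundedVariationOn : BoundedVariationOn u (Icc 0 T)
  energy_add_variation_le : ∀ t ∈ Icc 0 T,
    E t (u t) + (eVariationOn u (Icc 0 t)).toReal ≤ E 0 (u 0) + ∫ s in 0..t, P s (u s)

section AsymptoticStability

variable {ι : Type*} {l : Filter ι} {ξ : ι → X} {t : ℝ} {x : X}

lemma IsStable.isAsymptoticallyStable (hx : IsStable E t x) (hξ : Tendsto ξ l (𝓝 x))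
    (hE : Tendsto (fun i => E t (ξ i)) l (𝓝 (E t x))) : IsAsymptoticallyStable E t l ξ := by
  refine fun v => ⟨fun i => E t (ξ i) - E t x + dist (ξ i) x, ?_, fun i => ?_⟩
  · simpa using (hE.sub_const (E t x)).add (tendsto_iff_dist_tendsto_zero.1 hξ)
  · linarith [hx v, dist_triangle_left x v (ξ i)]

lemma IsAsymptoticallyStable.comp_tendsto (h : IsAsymptoticallyStable E t l ξ) {κ : Type*}
    {m : Filter κ} {φ : κ → ι} (hφ : Tendsto φ m l) :
    IsAsymptoticallyStable E t m (ξ ∘ φ) := fun v =>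
  let ⟨ε, hε, hle⟩ := h v
  ⟨ε ∘ φ, hε.comp hφ, fun k => hle (φ k)⟩

lemma IsAsymptoticallyStable.tendsto_energy (h : IsAsymptoticallyStable E t l ξ)
    (hE1 : CondE1 E T x₀) (ht : t ∈ Icc 0 T) (hξ : Tendsto ξ l (𝓝 x)) :
    Tendsto (fun i => E t (ξ i)) l (𝓝 (E t x)) := by
  obtain ⟨ε, hε, hle⟩ := h x
  have hupper : Tendsto (fun i => E t x + dist (ξ i) x + ε i) l (𝓝 (E t x)) := by
    simpa using ((tendsto_iff_dist_tendsto_zero.1 hξ).const_add (E t x)).add hε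
  refine tendsto_order.2 ⟨fun c hc => hE1.eventually_lt (.of_forall fun _ => ht) ht
    tendsto_const_nhds hξ hc, fun c hc => ?_⟩
  filter_upwards [hupper.eventually_lt_const hc] with i hi using (hle i).trans_lt hi

lemma IsAsymptoticallyStable.isStable_of_tendsto [l.NeBot] (h : IsAsymptoticallyStable E t l ξ)
    (hE1 : CondE1 E T x₀) (ht : t ∈ Icc 0 T) (hξ : Tendsto ξ l (𝓝 x)) : IsStable E t x := by
  intro v
  obtain ⟨ε, hε, hle⟩ := h v
  refine le_of_tendsto_of_tendsto' (h.tendsto_energy hE1 ht hξ) ?_ hle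
  simpa using ((hξ.dist tendsto_const_nhds).const_add (E t v)).add hε

end AsymptoticStability

lemma SatisfiesEnergyInequality.add_dist_le_add_integral {u : ℝ → X}
    (hu : SatisfiesEnergyInequality E P T u) {t : ℝ} (ht : t ∈ Icc 0 T) (x₀ : X) :
    E t (u t) + dist x₀ (u t) ≤ E 0 (u 0) + dist x₀ (u 0) + ∫ s in 0..t, P s (u s) := by
  have hvar : dist (u 0) (u t) ≤ (eVariationOn u (Icc 0 t)).toReal :=
    (hu.boundedVariationOn.mono (Icc_subset_Icc_right ht.2)).dist_le (left_mem_Icc.2 ht.1)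
      (right_mem_Icc.2 ht.1)
  linarith [hu.energy_add_variation_le t ht, dist_triangle x₀ (u 0) (u t)]

lemma SatisfiesEnergyInequality.add_dist_le_mul_exp {u : ℝ → X}
    (hu : SatisfiesEnergyInequality E P T u) (hE2 : CondE2 E P T x₀ CP) {t : ℝ}
    (ht : t ∈ Icc 0 T) :
    E t (u t) + dist x₀ (u t) ≤ (E 0 (u 0) + dist x₀ (u 0)) * Real.exp (CP * t) := by
  by_cases hint : IntervalIntegrable (fun s => P s (u s)) volume 0 t
  · have hT : ∀ s ∈ Icc 0 t, s ∈ Icc 0 T := fun s hs => ⟨hs.1, hs.2.trans ht.2⟩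
    simpa using le_mul_exp_of_le_add_integral (b := fun s => E s (u s) + dist x₀ (u s)) hE2.1.le
      hint (fun s hs => hu.add_dist_le_add_integral (hT s hs) x₀)
      (fun s hs => (le_abs_self _).trans (hE2.abs_power_le (hT s hs) le_rfl))
      (right_mem_Icc.2 ht.1)
  · have hle := hu.add_dist_le_add_integral ht x₀
    rw [intervalIntegral.integral_undef hint, add_zero] at hle
    exact hle.trans (le_mul_of_one_le_right
      (hE2.add_dist_nonneg ⟨le_rfl, ht.1.trans ht.2⟩ _)
      (Real.one_le_exp (mul_nonneg hE2.1.le ht.1)))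

lemma SatisfiesEnergyInequality.add_dist_le_of_le {u : ℝ → X}
    (hu : SatisfiesEnergyInequality E P T u) (hE2 : CondE2 E P T x₀ CP) {A : ℝ}
    (hA : E 0 (u 0) + dist x₀ (u 0) ≤ A) {t : ℝ} (ht : t ∈ Icc 0 T) :
    E t (u t) + dist x₀ (u t) ≤ A * Real.exp (CP * T) := by
  have hA0 : 0 ≤ A := (hE2.add_dist_nonneg ⟨le_rfl, ht.1.trans ht.2⟩ _).trans hA
  have hCP := hE2.1.le
  refine (hu.add_dist_le_mul_exp hE2 ht).trans ?_
  gcongr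
  exact ht.2

lemma CondE2.integral_power_le (hE2 : CondE2 E P T x₀ CP) {u : ℝ → X} {C : ℝ}
    (hC : ∀ s ∈ Icc 0 T, E s (u s) + dist x₀ (u s) ≤ C) {s t : ℝ} (hs : 0 ≤ s) (hst : s ≤ t)
    (ht : t ≤ T) : ∫ r in s..t, P r (u r) ≤ CP * C * (t - s) := by
  rw [← abs_of_nonneg (sub_nonneg.2 hst)]
  refine (Real.le_norm_self _).trans
    (intervalIntegral.norm_integral_le_of_norm_le_const fun r hr => ?_)
  rw [uIoc_of_le hst] at hr
  have hrT : r ∈ Icc 0 T := ⟨hs.trans hr.1.le, hr.2.trans ht⟩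
  exact hE2.abs_power_le hrT (hC r hrT)

lemma exists_eVariationOn_le_of_satisfiesEnergyInequality (hT : 0 ≤ T) (hE1 : CondE1 E T x₀)
    (hE2 : CondE2 E P T x₀ CP) (C : ℝ) :
    ∃ B : NNReal, ∀ u : ℝ → X, SatisfiesEnergyInequality E P T u →
      (∀ s ∈ Icc 0 T, E s (u s) + dist x₀ (u s) ≤ C) → eVariationOn u (Icc 0 T) ≤ B := by
  obtain ⟨R, hR⟩ := hE1.exists_dist_le C x₀
  refine ⟨(C + CP * C * (T - 0) + R).toNNReal, fun u hu hC => ?_⟩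
  have hTT : T ∈ Icc 0 T := right_mem_Icc.2 hT
  rw [← ENNReal.ofReal_toReal hu.boundedVariationOn]
  refine ENNReal.ofReal_le_ofReal ?_
  linarith [hu.energy_add_variation_le T hTT, hC 0 (left_mem_Icc.2 hT),
    hE2.integral_power_le hC le_rfl hT le_rfl, hE2.add_dist_nonneg hTT (u T), hR T hTT _ (hC T hTT),
    dist_comm x₀ (u T), dist_nonneg (x := x₀) (y := u 0)]

lemma SatisfiesEnergyInequality.of_tendsto (hE1 : CondE1 E T x₀) (hE2 : CondE2 E P T x₀ CP)
    (hE3 : CondE3 E P T) {ι : Type*} {l : Filter ι} [l.NeBot] [l.IsCountablyGenerated]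
    {w : ι → ℝ → X} (hw : ∀ i, SatisfiesEnergyInequality E P T (w i)) {C : ℝ}
    (hC : ∀ i, ∀ s ∈ Icc 0 T, E s (w i s) + dist x₀ (w i s) ≤ C) {u : ℝ → X}
    (hu : BoundedVariationOn u (Icc 0 T))
    (hwu : ∀ s ∈ Icc 0 T, Tendsto (fun i => w i s) l (𝓝 (u s)))
    (hE : ∀ s ∈ Icc 0 T, Tendsto (fun i => E s (w i s)) l (𝓝 (E s (u s)))) :
    SatisfiesEnergyInequality E P T u := by
  refine ⟨hu, fun t ht => ?_⟩
  have hsub : Icc 0 t ⊆ Icc 0 T := Icc_subset_Icc_right ht.2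
  have h0 : (0 : ℝ) ∈ Icc 0 T := left_mem_Icc.2 (ht.1.trans ht.2)
  have huC : ∀ s ∈ Icc 0 T, E s (u s) + dist x₀ (u s) ≤ C := fun s hs =>
    le_of_tendsto' ((hE s hs).add (tendsto_const_nhds.dist (hwu s hs))) fun i => hC i s hs
  have hpower : ∀ c > ∫ s in 0..t, P s (u s), ∀ᶠ i in l, ∫ s in 0..t, P s (w i s) < c := by
    intro c hc
    simp only [intervalIntegral.integral_of_le ht.1] at hc ⊢
    have hmem : ∀ᵐ s ∂volume.restrict (Ioc 0 t), s ∈ Icc 0 T :=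
      (ae_restrict_mem measurableSet_Ioc).mono fun s hs => hsub (Ioc_subset_Icc_self hs)
    exact eventually_integral_lt_of_forall_eventually_lt
      (fun i => (hE3.intervalIntegrable_power hE1 hE2 (hw i).boundedVariationOn (hC i) h0 ht).1)
      (hE3.intervalIntegrable_power hE1 hE2 hu huC h0 ht).1 (integrable_const (CP * C))
      (fun i => hmem.mono fun s hs => (le_abs_self _).trans (hE2.abs_power_le hs (hC i s hs)))
      (hmem.mono fun s hs _ hc => hE3.eventually_lt (.of_forall fun _ => hs) hs
        tendsto_const_nhds (hwu s hs) (hE s hs) hc) hc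
  refine le_of_forall_pos_le_add fun δ hδ => ?_
  obtain ⟨i, hvar, hpow, hEt, hE0⟩ := ((eventually_lt_eVariationOn_toReal
    (fun s hs => hwu s (hsub hs)) (fun i => (hw i).boundedVariationOn.mono hsub)
    (sub_lt_self _ (by positivity : 0 < δ / 4))).and
    ((hpower _ (lt_add_of_pos_right _ (by positivity : 0 < δ / 4))).and
    (((hE t ht).eventually_const_lt (sub_lt_self _ (by positivity : 0 < δ / 4))).and
    ((hE 0 h0).eventually_lt_const (lt_add_of_pos_right _ (by positivity : 0 < δ / 4)))))).exists
  linarith [(hw i).energy_add_variation_le t ht]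

lemma add_integral_power_le_of_isStable (hE1 : CondE1 E T x₀) (hE2 : CondE2 E P T x₀ CP)
    (hE3 : CondE3 E P T) {u : ℝ → X} (hu : BoundedVariationOn u (Icc 0 T)) {C : ℝ}
    (hC : ∀ s ∈ Icc 0 T, E s (u s) + dist x₀ (u s) ≤ C)
    (hstab : ∀ s ∈ Icc 0 T, IsStable E s (u s)) {t : ℝ} (ht : t ∈ Icc 0 T) :
    E 0 (u 0) + ∫ s in 0..t, P s (u s) ≤ E t (u t) + (eVariationOn u (Icc 0 t)).toReal := by
  have hsub : Icc 0 t ⊆ Icc 0 T := Icc_subset_Icc_right ht.2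
  have h0 : (0 : ℝ) ∈ Icc 0 t := left_mem_Icc.2 ht.1
  set V := variationOnFromTo u (Icc 0 t) 0
  have hincr : ∀ a ∈ Icc 0 t, ∀ b ∈ Icc 0 t, a ≤ b →
      E b (u b) - E a (u b) ≤ (E b (u b) + V b) - (E a (u a) + V a) := fun a ha b hb hab => by
    linarith [hstab a (hsub ha) (u b), dist_le_variationOnFromTo_sub
      (hu.mono hsub).locallyBoundedVariationOn h0 ha hb hab]
  have hmono : MonotoneOn (fun s => E s (u s) + V s + C * CP * Real.exp (CP * T) * s)
      (Icc 0 t) := fun a ha b hb hab => by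
    linarith [hincr a ha b hb hab, hE2.sub_le hE1 ha.1 hab (hsub hb).2 (hC b (hsub hb))]
  have hint := hE3.intervalIntegrable_power hE1 hE2 hu hC (hsub h0) ht
  have hle := integral_le_sub_of_monotoneOn_add_mul ht.1 hmono hint fun s hs r hr => by
    have hs' := Ioo_subset_Icc_self hs
    have hpower := hE2.eventually_lt_sub (hsub hs') hr
    rw [nhdsWithin_Ico_eq_nhdsLT hs.1] at hpower
    filter_upwards [hpower, Ico_mem_nhdsLT hs.1] with σ hσ hσs
    exact hσ.le.trans (hincr σ ⟨hσs.1, hσs.2.le.trans hs.2.le⟩ s hs' hσs.2.le)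
  have hV0 : V 0 = 0 := variationOnFromTo.self u _ 0
  have hVt : V t = (eVariationOn u (Icc 0 t)).toReal := by
    simp only [V, variationOnFromTo.eq_of_le u _ ht.1, inter_self]
  linarith

lemma SatisfiesEnergyInequality.isEnergeticSol {u : ℝ → X}
    (hu : SatisfiesEnergyInequality E P T u) (hE1 : CondE1 E T x₀) (hE2 : CondE2 E P T x₀ CP)
    (hE3 : CondE3 E P T) (hstab : ∀ s ∈ Icc 0 T, IsStable E s (u s)) :
    IsEnergeticSol E P T u := by
  refine ⟨by rw [varD_eq_eVariationOn]; exact hu.boundedVariationOn, fun t ht => ⟨hstab t ht, ?_⟩⟩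
  rw [varD_eq_eVariationOn]
  exact (hu.energy_add_variation_le t ht).antisymm (add_integral_power_le_of_isStable hE1 hE2 hE3
    hu.boundedVariationOn (fun s hs => hu.add_dist_le_of_le hE2 le_rfl hs) hstab ht)

theorem exists_subseq_tendsto_isEnergeticSol (hT : 0 ≤ T) (hE1 : CondE1 E T x₀)
    (hE2 : CondE2 E P T x₀ CP) (hE3 : CondE3 E P T) {w : ℕ → ℝ → X} {u₀ : X}
    (hw0 : Tendsto (fun n => w n 0) atTop (𝓝 u₀))
    (hw : ∀ n, SatisfiesEnergyInequality E P T (w n))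
    (hstab : ∀ t ∈ Icc 0 T, IsAsymptoticallyStable E t atTop fun n => w n t) :
    ∃ φ : ℕ → ℕ, StrictMono φ ∧ ∃ u : ℝ → X, u 0 = u₀ ∧
      (∀ t ∈ Icc 0 T, Tendsto (fun k => w (φ k) t) atTop (𝓝 (u t)) ∧
        Tendsto (fun k => E t (w (φ k) t)) atTop (𝓝 (E t (u t)))) ∧ IsEnergeticSol E P T u := by
  have h0 : (0 : ℝ) ∈ Icc 0 T := left_mem_Icc.2 hT
  obtain ⟨A, hA⟩ : BddAbove (range fun n => E 0 (w n 0) + dist x₀ (w n 0)) :=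
    (((hstab 0 h0).tendsto_energy hE1 h0 hw0).add (tendsto_const_nhds.dist hw0)).bddAbove_range
  have hC : ∀ n, ∀ t ∈ Icc 0 T, E t (w n t) + dist x₀ (w n t) ≤ A * Real.exp (CP * T) :=
    fun n t ht => (hw n).add_dist_le_of_le hE2 (hA ⟨n, rfl⟩) ht
  obtain ⟨K, hK, hCK⟩ := hE1.exists_isCompact (A * Real.exp (CP * T))
  obtain ⟨B, hB⟩ := exists_eVariationOn_le_of_satisfiesEnergyInequality hT hE1 hE2
    (A * Real.exp (CP * T))
  obtain ⟨φ, hφ, u, huB, hu⟩ := exists_subseq_tendsto_Icc_of_eVariationOn_le hK hT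
    (fun n t ht => hCK t ht _ (hC n t ht)) fun n => hB (w n) (hw n) (hC n)
  have hstabφ : ∀ t ∈ Icc 0 T, IsAsymptoticallyStable E t atTop fun k => w (φ k) t :=
    fun t ht => (hstab t ht).comp_tendsto hφ.tendsto_atTop
  have hE : ∀ t ∈ Icc 0 T, Tendsto (fun k => E t (w (φ k) t)) atTop (𝓝 (E t (u t))) :=
    fun t ht => (hstabφ t ht).tendsto_energy hE1 ht (hu t ht)
  have hineq : SatisfiesEnergyInequality E P T u := .of_tendsto hE1 hE2 hE3 (fun k => hw (φ k))
    (fun k => hC (φ k)) (ne_top_of_le_ne_top ENNReal.coe_ne_top huB) hu hE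
  exact ⟨φ, hφ, u, tendsto_nhds_unique (hu 0 h0) (hw0.comp hφ.tendsto_atTop),
    fun t ht => ⟨hu t ht, hE t ht⟩, hineq.isEnergeticSol hE1 hE2 hE3 fun t ht =>
      (hstabφ t ht).isStable_of_tendsto hE1 ht (hu t ht)⟩

end EnergyInequality

section JumpSet

variable {u : ℝ → X} {T t : ℝ}

lemma lLim_eq_of_continuousWithinAt (ht : t ∈ Icc 0 T)
    (hu : ContinuousWithinAt u (Icc 0 T) t) : lLim u t = u t := by
  unfold lLim
  split_ifs with h0
  · rw [h0.antisymm ht.1]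
  · have hmem : Icc 0 T ∈ 𝓝[≤] t :=
      mem_of_superset (Icc_mem_nhdsLE (not_le.1 h0)) (Icc_subset_Icc_right ht.2)
    exact (hu.mono_of_mem_nhdsWithin hmem).leftLim_eq

lemma rLim_eq_of_continuousWithinAt (ht : t ∈ Icc 0 T)
    (hu : ContinuousWithinAt u (Icc 0 T) t) : rLim u T t = u t := by
  unfold rLim
  split_ifs with hT
  · rw [hT.antisymm ht.2]
  · have hmem : Icc 0 T ∈ 𝓝[≥] t :=
      mem_of_superset (Icc_mem_nhdsGE (not_le.1 hT)) (Icc_subset_Icc_left ht.1)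
    exact (hu.mono_of_mem_nhdsWithin hmem).rightLim_eq

lemma countable_jumpSet (hu : BoundedVariationOn u (Icc 0 T)) : (jumpSet u T).Countable := by
  refine (countable_not_continuousWithinAt_of_locallyBoundedVariationOn
    hu.locallyBoundedVariationOn).mono ?_
  rintro t ⟨ht, hl | hr⟩
  · exact ⟨ht, fun hc => hl (lLim_eq_of_continuousWithinAt ht hc)⟩
  · exact ⟨ht, fun hc => hr (rLim_eq_of_continuousWithinAt ht hc)⟩

lemma mem_closure_Ioo_diff_jumpSet (hu : BoundedVariationOn u (Icc 0 T)) {a : ℝ} (hat : a < t) :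
    t ∈ closure (Ioo a t \ jumpSet u T) := by
  have hsub : Ioo a t ⊆ closure (Ioo a t \ jumpSet u T) :=
    ((countable_jumpSet hu).dense_compl ℝ).open_subset_closure_inter isOpen_Ioo
  refine closure_minimal hsub isClosed_closure ?_
  rw [closure_Ioo hat.ne]
  exact right_mem_Icc.2 hat.le

lemma varAug_add_eVariationOn_le {e : ℝ → X → X → ℝ≥0∞} (he : ∀ t x, e t x x = 0) {a s : ℝ}
    (has : a ≤ s) (hst : s ≤ t) (hs : lLim u s = u s) :
    varAug e u T a s + eVariationOn u (Icc s t) ≤ varAug e u T a t := by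
  have hjmp : jmpVar e u T a s ≤ jmpVar e u T a t := by
    unfold jmpVar
    rw [hs, he, zero_tsub, add_zero]
    exact add_le_add le_self_add (ENNReal.tsum_mono_subtype
      (fun r => (e r (lLim u r) (u r) - edist (lLim u r) (u r))
        + (e r (u r) (rLim u T r) - edist (u r) (rLim u T r)))
      (inter_subset_inter_right _ (Ioo_subset_Ioo_right hst)))
  have hvar : eVariationOn u (Icc a s) + eVariationOn u (Icc s t) = eVariationOn u (Icc a t) := by
    simpa only [univ_inter] using eVariationOn.Icc_add_Icc u (s := univ) has hst (mem_univ s)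
  unfold varAug
  rw [varD_eq_eVariationOn, varD_eq_eVariationOn, ← hvar, add_right_comm]
  gcongr

end JumpSet

section ViscoEnergetic

variable {E P : ℝ → X → ℝ} {T CP μ : ℝ} {x₀ : X} {u : ℝ → X}

lemma veCost_self (E : ℝ → X → ℝ) (μ t : ℝ) (x : X) : veCost E μ t x x = 0 := by
  refine le_antisymm (iInf_le_of_le {0} (iInf_le_of_le (fun _ => x) (iInf_le_of_le
    ⟨singleton_nonempty _, isCompact_singleton, continuousOn_const, rfl, rfl⟩ ?_))) bot_le
  have : IsEmpty ↥(({0} : Set ℝ) \ {sSup {0}}) := by simp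
  simp [trCost, varD_eq_eVariationOn]

lemma IsVESol.boundedVariationOn (hu : IsVESol E P T μ u) : BoundedVariationOn u (Icc 0 T) := by
  rw [BoundedVariationOn, ← varD_eq_eVariationOn]
  exact hu.1

lemma IsVESol.satisfiesEnergyInequality (hu : IsVESol E P T μ u) :
    SatisfiesEnergyInequality E P T u := by
  refine ⟨hu.boundedVariationOn, fun t ht => ?_⟩
  obtain ⟨hfin, hbal⟩ := hu.2.2 t ht
  have hvar : eVariationOn u (Icc 0 t) ≤ varAug (veCost E μ) u T 0 t := by
    rw [varAug, varD_eq_eVariationOn]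
    exact le_self_add
  linarith [ENNReal.toReal_mono hfin hvar]

lemma IsVESol.energy_add_dist_le (hu : IsVESol E P T μ u) (hE1 : CondE1 E T x₀)
    (hE2 : CondE2 E P T x₀ CP) (hE3 : CondE3 E P T) {C : ℝ}
    (hC : ∀ r ∈ Icc 0 T, E r (u r) + dist x₀ (u r) ≤ C) {s t : ℝ}
    (hs : s ∈ Icc 0 T \ jumpSet u T) (hst : s ≤ t) (ht : t ≤ T) :
    E t (u t) + dist (u s) (u t) ≤ E s (u s) + CP * C * (t - s) := by
  have htT : t ∈ Icc 0 T := ⟨hs.1.1.trans hst, ht⟩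
  have h0 : (0 : ℝ) ∈ Icc 0 T := ⟨le_rfl, htT.1.trans ht⟩
  obtain ⟨hfins, hbals⟩ := hu.2.2 s hs.1
  obtain ⟨hfint, hbalt⟩ := hu.2.2 t htT
  have haug : varAug (veCost E μ) u T 0 s + edist (u s) (u t) ≤ varAug (veCost E μ) u T 0 t :=
    (add_le_add_right (eVariationOn.edist_le u (left_mem_Icc.2 hst) (right_mem_Icc.2 hst)) _).trans
      (varAug_add_eVariationOn_le (veCost_self E μ) hs.1.1 hst
        (not_not.1 fun h => hs.2 ⟨hs.1, .inl h⟩))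
  have haug' := ENNReal.toReal_mono hfint haug
  rw [ENNReal.toReal_add hfins (edist_ne_top _ _), ← dist_edist] at haug'
  have hint := fun r (hr : r ∈ Icc 0 T) =>
    hE3.intervalIntegrable_power hE1 hE2 hu.boundedVariationOn hC h0 hr
  linarith [intervalIntegral.integral_interval_sub_left (hint t htT) (hint s hs.1),
    hE2.integral_power_le hC hs.1.1 hst ht]

lemma IsVESol.energy_le_add_sq (hu : IsVESol E P T μ u) (hμ : 0 ≤ μ) (hE1 : CondE1 E T x₀)
    (hE2 : CondE2 E P T x₀ CP) (hE3 : CondE3 E P T) {C R : ℝ} {v : X}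
    (hC : ∀ s ∈ Icc 0 T, E s (u s) + dist x₀ (u s) ≤ C) (hR : ∀ s ∈ Icc 0 T, dist (u s) v ≤ R)
    {t : ℝ} (ht : t ∈ Ioc 0 T) : E t (u t) ≤ E t v + dist (u t) v + μ / 2 * R ^ 2 := by
  have hsub : Ioo 0 t \ jumpSet u T ⊆ Icc 0 T := fun s hs => ⟨hs.1.1.le, hs.1.2.le.trans ht.2⟩
  have : (𝓝[Ioo 0 t \ jumpSet u T] t).NeBot := mem_closure_iff_nhdsWithin_neBot.1
    (mem_closure_Ioo_diff_jumpSet hu.boundedVariationOn ht.1)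
  have hlim : Tendsto (fun s => E s v + dist (u t) v + μ / 2 * R ^ 2 + CP * C * (t - s))
      (𝓝[Ioo 0 t \ jumpSet u T] t) (𝓝 (E t v + dist (u t) v + μ / 2 * R ^ 2)) := by
    have henergy := (hE2.continuousOn hE1 v t (Ioc_subset_Icc_self ht)).mono hsub
    have hslope : Tendsto (fun s => CP * C * (t - s)) (𝓝 t) (𝓝 0) :=
      (by fun_prop : Continuous fun s => CP * C * (t - s)).tendsto' t 0 (by simp)
    simpa using
      ((henergy.tendsto.add_const _).add_const _).add (hslope.mono_left nhdsWithin_le_nhds)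
  refine ge_of_tendsto hlim (eventually_mem_nhdsWithin.mono fun s hs => ?_)
  have hdist : μ / 2 * dist (u s) v ^ 2 ≤ μ / 2 * R ^ 2 := by
    gcongr
    exact hR s (hsub hs)
  have hstab := hu.2.1 s ⟨hsub hs, hs.2⟩ v
  unfold Dmu at hstab
  linarith [hu.energy_add_dist_le hE1 hE2 hE3 hC ⟨hsub hs, hs.2⟩ hs.1.2.le ht.2,
    dist_triangle (u s) (u t) v]

lemma isAsymptoticallyStable_of_isVESol (hE1 : CondE1 E T x₀) (hE2 : CondE2 E P T x₀ CP)
    (hE3 : CondE3 E P T) {ι : Type*} {l : Filter ι} {μ : ι → ℝ} (hμ : ∀ i, 0 ≤ μ i)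
    (hμ0 : Tendsto μ l (𝓝 0)) {w : ι → ℝ → X} (hw : ∀ i, IsVESol E P T (μ i) (w i)) {A : ℝ}
    (hA : ∀ i, E 0 (w i 0) + dist x₀ (w i 0) ≤ A) {t : ℝ} (ht : t ∈ Ioc 0 T) :
    IsAsymptoticallyStable E t l fun i => w i t := by
  intro v
  have hC : ∀ i, ∀ s ∈ Icc 0 T, E s (w i s) + dist x₀ (w i s) ≤ A * Real.exp (CP * T) :=
    fun i s hs => (hw i).satisfiesEnergyInequality.add_dist_le_of_le hE2 (hA i) hs
  obtain ⟨R, hR⟩ := hE1.exists_dist_le (A * Real.exp (CP * T)) v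
  refine ⟨fun i => μ i / 2 * R ^ 2, by simpa using (hμ0.div_const 2).mul_const (R ^ 2),
    fun i => (hw i).energy_le_add_sq (hμ i) hE1 hE2 hE3 (hC i) (fun s hs => ?_) ht⟩
  exact hR s hs _ (hC i s hs)

end ViscoEnergetic

theorem statement8_general
    {X : Type*} [MetricSpace X]
    (T : ℝ) (hT : 0 ≤ T) (E P : ℝ → X → ℝ) (x₀ : X) (CP : ℝ)
    (hE1 : CondE1 E T x₀) (hE2 : CondE2 E P T x₀ CP)
    (hE3 : CondE3 E P T)
    (μ : ℕ → ℝ) (hμnonneg : ∀ n, 0 ≤ μ n) (hμ : Tendsto μ atTop (𝓝 (0 : ℝ)))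
    (u0 : ℕ → X) (u₀ : X)
    (hu0 : Tendsto u0 atTop (𝓝 u₀))
    (hu0E : Tendsto (fun n => E 0 (u0 n)) atTop (𝓝 (E 0 u₀)))
    (hstab : ∀ v : X, E 0 u₀ ≤ E 0 v + dist u₀ v)
    (un : ℕ → ℝ → X)
    (hsol : ∀ n, IsVESol E P T (μ n) (un n))
    (hinit : ∀ n, un n 0 = u0 n) :
    ∃ φ : ℕ → ℕ, StrictMono φ ∧ ∃ u : ℝ → X,
      varD u (Icc 0 T) ≠ ⊤ ∧ u 0 = u₀ ∧
      (∀ t ∈ Icc (0 : ℝ) T,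
        Tendsto (fun k => un (φ k) t) atTop (𝓝 (u t)) ∧
        Tendsto (fun k => E t (un (φ k) t)) atTop (𝓝 (E t (u t)))) ∧
      IsEnergeticSol E P T u := by
  obtain rfl : u0 = fun n => un n 0 := funext fun n => (hinit n).symm
  obtain ⟨A, hA⟩ : BddAbove (range fun n => E 0 (un n 0) + dist x₀ (un n 0)) :=
    (hu0E.add (tendsto_const_nhds.dist hu0)).bddAbove_range
  have hasymp : ∀ t ∈ Icc 0 T, IsAsymptoticallyStable E t atTop fun n => un n t := by
    intro t ht
    rcases ht.1.eq_or_lt with rfl | h0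
    · exact IsStable.isAsymptoticallyStable hstab hu0 hu0E
    · exact isAsymptoticallyStable_of_isVESol hE1 hE2 hE3 hμnonneg hμ hsol (fun n => hA ⟨n, rfl⟩)
        ⟨h0, ht.2⟩
  obtain ⟨φ, hφ, u, hu0, hlim, hu⟩ := exists_subseq_tendsto_isEnergeticSol hT hE1 hE2 hE3 hu0
    (fun n => (hsol n).satisfiesEnergyInequality) hasymp
  exact ⟨φ, hφ, u, hu.1, hu0, hlim, hu⟩

theorem statement8
    {X : Type*} [MetricSpace X] [CompleteSpace X]
    (T : ℝ) (hT : 0 < T) (E P : ℝ → X → ℝ) (x₀ : X) (CP : ℝ)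
    (hE1 : CondE1 E T x₀) (hE2 : CondE2 E P T x₀ CP)
    (hE3 : CondE3 E P T)
    (μ : ℕ → ℝ) (hμpos : ∀ n, 0 < μ n) (hμ : Tendsto μ atTop (𝓝 (0 : ℝ)))
    (u0 : ℕ → X) (u₀ : X)
    (hu0 : Tendsto u0 atTop (𝓝 u₀))
    (hu0E : Tendsto (fun n => E 0 (u0 n)) atTop (𝓝 (E 0 u₀)))
    (hstab : ∀ v : X, E 0 u₀ ≤ E 0 v + dist u₀ v)
    (un : ℕ → ℝ → X)
    (hsol : ∀ n, IsVESol E P T (μ n) (un n))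
    (hinit : ∀ n, un n 0 = u0 n) :
    ∃ φ : ℕ → ℕ, StrictMono φ ∧ ∃ u : ℝ → X,
      varD u (Icc 0 T) ≠ ⊤ ∧ u 0 = u₀ ∧
      (∀ t ∈ Icc (0 : ℝ) T,
        Tendsto (fun k => un (φ k) t) atTop (𝓝 (u t)) ∧
        Tendsto (fun k => E t (un (φ k) t)) atTop (𝓝 (E t (u t)))) ∧
      IsEnergeticSol E P T u :=
  statement8_general T hT.le E P x₀ CP hE1 hE2 hE3 μ (fun n => (hμpos n).le) hμ u0 u₀ hu0 hu0E
    hstab un hsol hinit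

end
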